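/- The sequence {V_n}_{n≥1} is ratio log-convex; that is, for every integer n ≥ 3, (V_n/V_{n−1})^2 ≤ (V_{n−1}/V_{n−2})(V_{n+1}/V_n). -/

import Mathlib

/-!
Write `r n = V n / V (n - 1)`. The recurrence reads `r n = A n - B n / r (n - 1)`, which lets one
express both `r (n - 1)` and `r (n + 1)` through `r n`: the claim
`r n ^ 2 ≤ r (n - 1) * r (n + 1)` becomes `0 ≤ F n (r n)` for the quartic
`F n r = r ^ 4 - A n * r ^ 3 + B n * A (n + 1) * r - B n * B (n + 1)`.
For `n ≥ 5` this quartic is increasing on `r ≥ 16` (`F_mono`), so a sufficiently sharp lower bound for `r n`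
is enough. The ratio has the asymptotic expansion `r n = 16 + 16 / n ^ 3 + 48 / n ^ 4 + ⋯`; its
truncation `L n` after the term of order `n ^ (-4)` is a lower bound for `r n` when `n ≥ 4`, by
induction (`le_step` shows that the recurrence preserves the bound), and it already satisfies
`0 ≤ F n (L n)` (`F_L_nonneg`). The cases `n = 3, 4` are computed directly.
-/

namespace FennesseyLarcombeFrench

/-- Coefficient of `V (n - 1)` in the recurrence solved for `V n`. -/
noncomputable def A (x : ℝ) : ℝ := 8 * (3 * x ^ 2 - x - 1) / x ^ 2

/-- Minus the coefficient of `V (n - 2)` in the recurrence solved for `V n`. -/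
noncomputable def B (x : ℝ) : ℝ := 128 * (x - 2) / (x - 1)

/-- Lower bound for the ratio `V n / V (n - 1)`: the truncation after order `n ^ (-4)` of its
asymptotic expansion in powers of `1 / n`. -/
noncomputable def L (x : ℝ) : ℝ := 16 + 16 * (x + 3) / x ^ 4

/-- The quartic whose nonnegativity at `V n / V (n - 1)` is the claimed inequality. -/
noncomputable def F (x r : ℝ) : ℝ :=
  r ^ 4 - A x * r ^ 3 + B x * A (x + 1) * r - B x * B (x + 1)

lemma sixteen_le_L {x : ℝ} (hx : 0 < x) : 16 ≤ L x := by
  unfold L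
  have : 0 ≤ 16 * (x + 3) / x ^ 4 := by positivity
  linarith

lemma A_le {x : ℝ} (hx : 0 < x) : A x ≤ 24 := by
  unfold A
  rw [div_le_iff₀ (by positivity)]
  nlinarith

lemma B_pos {x : ℝ} (hx : 2 < x) : 0 < B x := by
  unfold B
  exact div_pos (by linarith) (by linarith)

lemma L_le_A {x : ℝ} (hx : 4 ≤ x) : L x ≤ A x := by
  obtain ⟨y, hy, rfl⟩ : ∃ y : ℝ, 0 ≤ y ∧ x = y + 4 := ⟨x - 4, by linarith, by ring⟩
  rw [← sub_nonneg]
  have h : A (y + 4) - L (y + 4) =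
      (8 * y ^ 4 + 120 * y ^ 3 + 664 * y ^ 2 + 1584 * y + 1296) / (y + 4) ^ 4 := by
    unfold A L
    field_simp
    ring
  rw [h]
  positivity

/-- `L` is a subsolution of the Riccati recurrence `r n = A n - B n / r (n - 1)`. -/
lemma le_step {x : ℝ} (hx : 4 ≤ x) : B (x + 1) ≤ (A (x + 1) - L (x + 1)) * L x := by
  obtain ⟨y, hy, rfl⟩ : ∃ y : ℝ, 0 ≤ y ∧ x = y + 4 := ⟨x - 4, by linarith, by ring⟩
  rw [← sub_nonneg]
  have h : (A (y + 4 + 1) - L (y + 4 + 1)) * L (y + 4) - B (y + 4 + 1) =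
      (1536 * y ^ 3 + 18816 * y ^ 2 + 74496 * y + 91776) / ((y + 4 + 1) ^ 4 * (y + 4) ^ 4) := by
    unfold A L B
    have : y + 4 + 1 - 1 ≠ 0 := by
      have : y + 4 + 1 - 1 = y + 4 := by ring
      rw [this]; positivity
    field_simp
    ring
  rw [h]
  positivity

/-- With `x = y + 4` the numerator is a polynomial in `y` with nonnegative coefficients. -/
lemma F_L_nonneg {x : ℝ} (hx : 4 ≤ x) : 0 ≤ F x (L x) := by
  obtain ⟨y, hy, rfl⟩ : ∃ y : ℝ, 0 ≤ y ∧ x = y + 4 := ⟨x - 4, by linarith, by ring⟩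
  have h : F (y + 4) (L (y + 4)) =
      (196608 * y ^ 14 + 11354112 * y ^ 13 + 304742400 * y ^ 12 + 5039357952 * y ^ 11 + 57369591808
        * y ^ 10 + 475722612736 * y ^ 9 + 2963687866368 * y ^ 8 + 14094012874752 * y ^ 7 +
        51422565138432 * y ^ 6 + 143269292900352 * y ^ 5 + 300105482633216 * y ^ 4 + 458390209986560
        * y ^ 3 + 482724401872896 * y ^ 2 + 313783520526336 * y + 95008224116736) /
        ((y + 4) ^ 16 * (y + 4 - 1) * (y + 4 + 1) ^ 2) := by
    unfold F A L B
    have : y + 4 - 1 ≠ 0 := by linarith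
    have : y + 4 + 1 - 1 ≠ 0 := by linarith
    field_simp
    ring
  have h1 : 0 < y + 4 - 1 := by linarith
  rw [h]
  positivity

lemma le_B_mul_A {x : ℝ} (hx : 5 ≤ x) : 2048 ≤ B x * A (x + 1) := by
  have h1 : 96 ≤ B x := by
    unfold B
    rw [le_div_iff₀ (by linarith)]
    linarith
  have h2 : 22 ≤ A (x + 1) := by
    unfold A
    rw [le_div_iff₀ (by positivity)]
    nlinarith
  nlinarith

/-- The quotient `(F x r - F x l) / (r - l)` is a cubic in `l, r`; it is bounded below by replacing
`A x` with `24` and `B x * A (x + 1)` with `2048`, and then expanded around `l = r = 16`. -/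
lemma F_mono {x l r : ℝ} (hx : 5 ≤ x) (hl : 16 ≤ l) (hr : l ≤ r) : F x l ≤ F x r := by
  have hA := A_le (x := x) (by linarith)
  have hBA := le_B_mul_A hx
  obtain ⟨a, ha, rfl⟩ : ∃ a : ℝ, 0 ≤ a ∧ l = a + 16 := ⟨l - 16, by linarith, by ring⟩
  obtain ⟨b, hb, rfl⟩ : ∃ b : ℝ, 0 ≤ b ∧ r = a + 16 + b := ⟨r - (a + 16), by linarith, by ring⟩
  set l := a + 16
  set r := l + b
  have hS : A x * (r ^ 2 + r * l + l ^ 2) ≤ 24 * (r ^ 2 + r * l + l ^ 2) := by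
    gcongr
  -- equality holds at the corner `r = l = 16`, which determines the constant `2048`
  have hK : 24 * (r ^ 2 + r * l + l ^ 2) ≤
      r ^ 3 + r ^ 2 * l + r * l ^ 2 + l ^ 3 + 2048 := by
    rw [← sub_nonneg]
    have : r ^ 3 + r ^ 2 * l + r * l ^ 2 + l ^ 3 + 2048 - 24 * (r ^ 2 + r * l + l ^ 2) =
        4 * a ^ 3 + 6 * a ^ 2 * b + 4 * a * b ^ 2 + b ^ 3 + 120 * a ^ 2 + 120 * a * b
          + 40 * b ^ 2 + 768 * a + 384 * b := by
      simp only [r, l]; ring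
    rw [this]
    positivity
  have h : F x r - F x l = b * (r ^ 3 + r ^ 2 * l + r * l ^ 2 + l ^ 3
      - A x * (r ^ 2 + r * l + l ^ 2) + B x * A (x + 1)) := by
    simp only [F, r]; ring
  have := mul_nonneg hb (show 0 ≤ r ^ 3 + r ^ 2 * l + r * l ^ 2 + l ^ 3
      - A x * (r ^ 2 + r * l + l ^ 2) + B x * A (x + 1) by linarith)
  linarith

end FennesseyLarcombeFrench

open FennesseyLarcombeFrench in
/-- The Fennessey-Larcombe-French sequence `{V_n}_{n ≥ 1}` is ratio log-convex. -/
theorem stmt_2 (V : ℕ → ℝ) (hV0 : V 0 = 1) (hV1 : V 1 = 8)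
    (hrec : ∀ n : ℕ, 2 ≤ n →
      ((n : ℝ) - 1) * (n : ℝ) ^ 2 * V n =
        8 * ((n : ℝ) - 1) * (3 * (n : ℝ) ^ 2 - (n : ℝ) - 1) * V (n - 1)
          - 128 * ((n : ℝ) - 2) * (n : ℝ) ^ 2 * V (n - 2)) :
    ∀ n : ℕ, 3 ≤ n →
      (V n / V (n - 1)) ^ 2 ≤ (V (n - 1) / V (n - 2)) * (V (n + 1) / V n) := by
  have h2 : V 2 = 144 := by
    have := hrec 2 (by norm_num)
    norm_num [hV0, hV1] at this; linarith
  have h3 : V 3 = 2432 := by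
    have := hrec 3 (by norm_num)
    norm_num [hV1, h2] at this; linarith
  have h4 : V 4 = 40000 := by
    have := hrec 4 (by norm_num)
    norm_num [h3, h2] at this; linarith
  have h5 : V 5 = 649728 := by
    have := hrec 5 (by norm_num)
    norm_num [h3, h4] at this; linarith
  have hAB : ∀ n : ℕ, V (n + 2) = A ((n : ℝ) + 2) * V (n + 1) - B ((n : ℝ) + 2) * V n := by
    intro n
    have h := hrec (n + 2) (by omega)
    rw [show n + 2 - 1 = n + 1 by omega, show n + 2 - 2 = n by omega] at h
    push_cast at h
    have hn : (0 : ℝ) ≤ n := n.cast_nonneg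
    have h1 : (n : ℝ) + 2 - 1 ≠ 0 := by linarith
    unfold A B
    field_simp
    linarith
  have hL : ∀ k : ℕ, 0 < V (k + 3) ∧ L ((k : ℝ) + 4) * V (k + 3) ≤ V (k + 4) := by
    intro k
    induction k with
    | zero => norm_num [h3, h4, L]
    | succ k ih =>
      obtain ⟨hp, hle⟩ := ih
      have hk : (0 : ℝ) ≤ k := k.cast_nonneg
      have h16 := sixteen_le_L (x := (k : ℝ) + 4) (by linarith)
      have hs := le_step (x := (k : ℝ) + 4) (by linarith)
      have hd := L_le_A (x := (k : ℝ) + 4 + 1) (by linarith)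
      have hr := hAB (k + 3)
      push_cast at hr ⊢
      rw [show (k : ℝ) + 3 + 2 = k + 4 + 1 by ring] at hr
      rw [show (k : ℝ) + 1 + 4 = k + 4 + 1 by ring]
      refine ⟨?_, ?_⟩
      · show 0 < V (k + 4)
        nlinarith
      · show _ * V (k + 4) ≤ V (k + 3 + 2)
        rw [hr]
        show _ ≤ _ * V (k + 4) - _
        have e1 := mul_le_mul_of_nonneg_left hle (sub_nonneg.2 hd)
        have e2 := mul_le_mul_of_nonneg_right hs hp.le
        linarith
  intro n hn
  rcases Nat.lt_or_ge n 5 with hlt | hge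
  · interval_cases n
    · norm_num [hV1, h2, h3, h4]
    · norm_num [h2, h3, h4, h5]
  obtain ⟨k, rfl⟩ : ∃ k, n = k + 5 := ⟨n - 5, by omega⟩
  rw [show k + 5 - 1 = k + 4 by omega, show k + 5 - 2 = k + 3 by omega,
    show k + 5 + 1 = k + 6 by omega]
  have hk : (0 : ℝ) ≤ k := k.cast_nonneg
  have p3 := (hL k).1
  have p4 : 0 < V (k + 4) := (hL (k + 1)).1
  have p5 : 0 < V (k + 5) := (hL (k + 2)).1
  have hle : L ((k : ℝ) + 5) * V (k + 4) ≤ V (k + 5) := by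
    have := (hL (k + 1)).2
    push_cast at this
    rwa [show (k : ℝ) + 1 + 4 = k + 5 by ring] at this
  have r5 : V (k + 5) = A ((k : ℝ) + 5) * V (k + 4) - B ((k : ℝ) + 5) * V (k + 3) := by
    have := hAB (k + 3)
    push_cast at this
    rwa [show (k : ℝ) + 3 + 2 = k + 5 by ring] at this
  have r6 : V (k + 6) = A ((k : ℝ) + 5 + 1) * V (k + 5) - B ((k : ℝ) + 5 + 1) * V (k + 4) := by
    have := hAB (k + 4)
    push_cast at this
    rwa [show (k : ℝ) + 4 + 2 = k + 5 + 1 by ring] at this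
  have hF : 0 ≤ F ((k : ℝ) + 5) (V (k + 5) / V (k + 4)) :=
    (F_L_nonneg (by linarith)).trans (F_mono (by linarith) (sixteen_le_L (by linarith))
      ((le_div_iff₀ p4).2 hle))
  have hB := B_pos (x := (k : ℝ) + 5) (by linarith)
  -- clear denominators in the quartic, then eliminate `V (k + 3)` and `V (k + 6)`
  have key : V (k + 5) ^ 3 * V (k + 3) ≤ V (k + 4) ^ 3 * V (k + 6) := by
    have e : V (k + 4) ^ 4 * F ((k : ℝ) + 5) (V (k + 5) / V (k + 4)) =
        B ((k : ℝ) + 5) * (V (k + 4) ^ 3 * V (k + 6) - V (k + 5) ^ 3 * V (k + 3)) := by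
      have e3 : B ((k : ℝ) + 5) * V (k + 3) = A ((k : ℝ) + 5) * V (k + 4) - V (k + 5) := by
        linarith
      rw [r6]
      unfold F
      field_simp
      linear_combination V (k + 5) ^ 3 * e3
    have : 0 ≤ V (k + 4) ^ 4 * F ((k : ℝ) + 5) (V (k + 5) / V (k + 4)) := by positivity
    rw [e] at this
    linarith [nonneg_of_mul_nonneg_right this hB]
  rw [div_pow, div_mul_div_comm, div_le_div_iff₀ (by positivity) (by positivity)]
  nlinarith [mul_le_mul_of_nonneg_left key p5.le, mul_le_mul_of_nonneg_left key p4.le]
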